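/- Let F be a free group and p ∈ F primitive. If β ∈ F satisfies p^{r'} = β * p^{r''} * β⁻¹ with r'' ≠ 0, then r' = r'' and β ∈ ⟨p⟩. -/

import Mathlib

open scoped Pointwise

/-- An element `p` of a free group is primitive if it is nontrivial and its only
roots are `p` itself and `p⁻¹`. -/
def IsPrimitiveElt {A : Type*} (p : FreeGroup A) : Prop :=
  p ≠ 1 ∧ ∀ (w : FreeGroup A) (l : ℤ), w ^ l = p → w = p ∨ w = p⁻¹

/-- The coset `v·⟨p⟩ = {v * p^k : k ∈ ℤ}`. -/
def coset {A : Type*} (v p : FreeGroup A) : Set (FreeGroup A) :=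
  {x | ∃ k : ℤ, x = v * p ^ k}

/-- A free group element is cyclically reduced if its reduced word does not begin
and end with mutually inverse letters. -/
def CyclicallyReduced {A : Type*} [DecidableEq A] (w : FreeGroup A) : Prop :=
  ∀ x y : A × Bool, w.toWord.head? = some x → w.toWord.getLast? = some y →
    ¬(x.1 = y.1 ∧ x.2 = !y.2)

theorem free_aux_word {X : Type*} (z : FreeGroup X) (hz : z ≠ 1)
    (hc : ∀ g, Commute (FreeGroup.of g) z) : Subsingleton X := by
  classical
  refine ⟨fun x y => ?_⟩
  by_contra hxy
  have hw : z.toWord ≠ [] := fun h => hz (FreeGroup.toWord_eq_nil_iff.1 h)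
  obtain ⟨a, L, haL⟩ := List.exists_cons_of_ne_nil hw
  obtain ⟨g, hg⟩ : ∃ g : X, g ≠ a.1 := by
    by_cases h : x = a.1
    · exact ⟨y, fun h' => hxy (h.trans h'.symm)⟩
    · exact ⟨x, h⟩
  have hred : FreeGroup.IsReduced z.toWord := FreeGroup.isReduced_toWord
  set l := z.toWord.getLast hw with hl
  have hcomm : ∀ b : Bool, Commute (FreeGroup.mk [(g, b)]) z := by
    intro b
    cases b
    · have := (hc g).inv_left
      simpa [FreeGroup.of, FreeGroup.inv_mk, FreeGroup.invRev] using this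
    · exact hc g
  have h1 : FreeGroup.IsReduced ((g, l.2) :: z.toWord) := by
    rw [haL] at hred ⊢
    exact FreeGroup.isReduced_cons_cons.2 ⟨fun h => absurd h hg, hred⟩
  have h2 : FreeGroup.IsReduced (z.toWord ++ [(g, l.2)]) := by
    unfold FreeGroup.IsReduced at hred ⊢
    rw [List.isChain_append]
    refine ⟨hred, List.isChain_singleton _, ?_⟩
    intro u hu v hv
    rw [List.getLast?_eq_getLast_of_ne_nil hw] at hu
    simp at hu hv
    subst hv
    intro _
    rw [← hu]
  have h3 : FreeGroup.mk ((g, l.2) :: z.toWord) = FreeGroup.mk (z.toWord ++ [(g, l.2)]) := by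
    have := (hcomm l.2).eq
    have hm : FreeGroup.mk z.toWord = z := FreeGroup.mk_toWord
    rw [← FreeGroup.mul_mk, hm, ← this]
    conv_rhs => rw [← hm]
    rw [FreeGroup.mul_mk]; rfl
  have h4 := congrArg FreeGroup.toWord h3
  rw [FreeGroup.toWord_mk, FreeGroup.toWord_mk, h1.reduce_eq, h2.reduce_eq, haL] at h4
  simp only [List.cons_append, List.cons.injEq] at h4
  exact hg (by rw [← h4.1])

theorem free_aux_cyclic {G : Type*} [Group G] [IsFreeGroup G] (z : G) (hz : z ≠ 1)
    (hc : ∀ g, Commute g z) : IsCyclic G := by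
  let e := IsFreeGroup.toFreeGroup G
  have hs : Subsingleton (IsFreeGroup.Generators G) := by
    apply free_aux_word (e z) (by simpa using hz)
    intro g
    have := (hc (e.symm (FreeGroup.of g))).map e
    simpa using this
  have : IsCyclic (FreeGroup (IsFreeGroup.Generators G)) := by
    rcases isEmpty_or_nonempty (IsFreeGroup.Generators G) with h | ⟨⟨x⟩⟩
    · infer_instance
    · have : Unique (IsFreeGroup.Generators G) := ⟨⟨x⟩, fun _ => Subsingleton.elim _ _⟩
      infer_instance
  exact isCyclic_of_surjective e.symm e.symm.surjective

theorem free_aux_root {A : Type*} (z a b : FreeGroup A) (hz : z ≠ 1)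
    (ha : Commute a z) (hb : Commute b z) :
    ∃ w, a ∈ Subgroup.zpowers w ∧ b ∈ Subgroup.zpowers w := by
  let H := Subgroup.centralizer {z}
  have mem : ∀ c, c ∈ H ↔ Commute c z := by
    intro c
    simp only [H, Subgroup.mem_centralizer_singleton_iff]
    exact ⟨fun h => h, fun h => h⟩
  have hcyc : IsCyclic H := by
    refine free_aux_cyclic (⟨z, (mem z).2 (Commute.refl z)⟩ : H) ?_ ?_
    · intro h; exact hz (congrArg Subtype.val h)
    · intro g
      exact Subtype.ext ((mem g.1).1 g.2)
  obtain ⟨w, hw⟩ := hcyc.exists_generator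
  refine ⟨w.1, ?_, ?_⟩
  · obtain ⟨k, hk⟩ := hw ⟨a, (mem a).2 ha⟩
    exact ⟨k, by simpa using congrArg Subtype.val hk⟩
  · obtain ⟨k, hk⟩ := hw ⟨b, (mem b).2 hb⟩
    exact ⟨k, by simpa using congrArg Subtype.val hk⟩

/-- Anything commuting with a nontrivial element commuting with a primitive `p` is a power of `p`. -/
theorem free_aux_prim {A : Type*} (p z b : FreeGroup A) (hp : IsPrimitiveElt p) (hz : z ≠ 1)
    (ha : Commute p z) (hb : Commute b z) : b ∈ Subgroup.zpowers p := by
  obtain ⟨w, ⟨k, hk⟩, hw⟩ := free_aux_root z p b hz ha hb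
  rcases hp.2 w k hk with h | h
  · rwa [← h]
  · rw [h, Subgroup.zpowers_inv] at hw
    exact hw

theorem stmt6 {A : Type*} (p β : FreeGroup A) (hp : IsPrimitiveElt p)
    (r' r'' : ℤ) (hr : r'' ≠ 0) (h : p ^ r' = β * p ^ r'' * β⁻¹) :
    r' = r'' ∧ β ∈ Subgroup.zpowers p := by
  have inj : ∀ m n : ℤ, p ^ m = p ^ n → m = n := fun m n hmn =>
    injective_zpow_iff_not_isOfFinOrder.2 (not_isOfFinOrder_of_isMulTorsionFree hp.1) hmn
  have hz : p ^ r'' ≠ 1 := fun h0 => hr (inj _ _ (by simpa using h0))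
  have hq : p ^ r' = (β * p * β⁻¹) ^ r'' := by rw [conj_zpow, h]
  have hz' : p ^ r' ≠ 1 := by
    intro h0
    rw [h] at h0
    exact hz (by simpa using h0)
  obtain ⟨k, hk⟩ := free_aux_prim p (p ^ r') (β * p * β⁻¹) hp hz' ((Commute.refl p).zpow_right _)
    (by rw [hq]; exact (Commute.refl _).zpow_right _)
  simp only at hk
  have hroot : (β⁻¹ * p * β) ^ k = p := by
    have := conj_zpow (i := k) (a := β⁻¹) (b := p)
    rw [inv_inv] at this
    rw [this, hk]; group
  have hr' : r' = k * r'' := by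
    apply inj
    rw [zpow_mul, hk, hq]
  have hcases : β * p = p * β ∨ β * p = p⁻¹ * β := by
    rcases hp.2 _ _ hroot with h1 | h1
    · left
      calc β * p = β * (β⁻¹ * p * β) := by rw [h1]
        _ = p * β := by group
    · right
      have h2 : β⁻¹ * p⁻¹ * β = p := by
        have h3 := congrArg (·⁻¹) h1
        simpa [mul_assoc] using h3
      calc β * p = β * (β⁻¹ * p⁻¹ * β) := by rw [h2]
        _ = p⁻¹ * β := by group
  rcases hcases with h1 | h1
  · refine ⟨?_, free_aux_prim p p β hp hp.1 (Commute.refl p) h1⟩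
    apply inj
    rw [hq, h1]; group
  · exfalso
    have hsc : SemiconjBy β p p⁻¹ := h1
    have h2 : Commute (β * β) p := by
      have := hsc.inv_right
      rw [inv_inv] at this
      exact this.mul_left hsc
    obtain ⟨m, hm⟩ := free_aux_prim p p (β * β) hp hp.1 (Commute.refl p) h2
    simp only at hm
    have h3 : β * p ^ m = p⁻¹ ^ m * β := (hsc.zpow_right m).eq
    have h4 : p ^ m = p ^ (-m) := by
      rw [zpow_neg, ← inv_zpow]
      apply mul_right_cancel (b := β)
      rw [← h3, hm]; group
    have h5 : m = 0 := by have := inj _ _ h4; omega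
    have h6 : β = 1 := by
      rw [h5, zpow_zero] at hm
      have : β ^ 2 = 1 := by rw [pow_two, ← hm]
      exact (pow_eq_one_iff_left (by norm_num)).1 this
    rw [h6] at h1
    have h7 : (1 : ℤ) = -1 := inj _ _ (by simpa using h1)
    omega
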